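/- arXiv:1506.08565 — 9 statements merged into one kernel-verified Lean document; each statement's English description precedes it below -/
import Mathlib

section
/- Let β > 0, b ≥ 0, e ≥ 0 and R_r ≥ 0 be real numbers, and define the key-reconciliation function R_sk(R_r) = (β/2)·log₂( (1 − 4^(−R_r/β)·(b − e) + b) / (1 + e) ). Then R_sk(R_r) > 0 if and only if both R_r > 0 and b > e. -/
/-!
Put `t = 4 ^ (-Rr / β)`, so that `0 < t ≤ 1`, with `t < 1` exactly when `0 < Rr`. The argument of
the logarithm is positive, as its numerator is `1 + (1 - t) * b + t * e`, and it exceeds `1` exactly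
when `0 < (1 - t) * (b - e)`. Since `0 ≤ 1 - t`, this product is positive iff `t < 1` and `e < b`.
-/

open Real

theorem stmt_0 (β b e Rr : ℝ) (hβ : 0 < β) (hb : 0 ≤ b) (he : 0 ≤ e) (hRr : 0 ≤ Rr) :
    0 < (β / 2) * Real.logb 2 ((1 - (4 : ℝ) ^ (-Rr / β) * (b - e) + b) / (1 + e)) ↔
      (0 < Rr ∧ e < b) := by
  have ht0 : 0 < (4 : ℝ) ^ (-Rr / β) := by positivity
  have ht1 : (4 : ℝ) ^ (-Rr / β) ≤ 1 :=
    Real.rpow_le_one_of_one_le_of_nonpos (by norm_num)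
      (div_nonpos_of_nonpos_of_nonneg (by linarith) hβ.le)
  have htlt : (4 : ℝ) ^ (-Rr / β) < 1 ↔ 0 < Rr := by
    rw [Real.rpow_lt_one_iff_of_pos (by norm_num), div_lt_iff₀ hβ]
    norm_num
  rw [← htlt]
  generalize (4 : ℝ) ^ (-Rr / β) = t at ht0 ht1
  have hpos : 0 < (1 - t * (b - e) + b) / (1 + e) := by
    apply div_pos _ (by linarith)
    nlinarith [mul_nonneg (sub_nonneg.2 ht1) hb, mul_nonneg ht0.le he]
  rw [mul_pos_iff_of_pos_left (half_pos hβ), Real.logb_pos_iff (by norm_num) hpos,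
    one_lt_div (by linarith)]
  have hprod : 1 + e < 1 - t * (b - e) + b ↔ 0 < (1 - t) * (b - e) := by
    constructor <;> intro h <;> linarith
  rw [hprod]
  constructor
  · intro h
    have hbe : 0 < b - e := pos_of_mul_pos_right h (sub_nonneg.2 ht1)
    exact ⟨sub_pos.1 (pos_of_mul_pos_left h hbe.le), sub_pos.1 hbe⟩
  · rintro ⟨h1, h2⟩
    exact mul_pos (sub_pos.2 h1) (sub_pos.2 h2)
end

section
/- Let b > e ≥ 0 and r̃ > 0 be real numbers. The function f : (0,1) → ℝ defined by f(β) = (β/2)·log₂( (1 + b − 4^(−(1−β)·r̃/β)·(b − e)) / (1 + e) ) is strictly concave on the open interval (0,1). -/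
open Real

/-!
With `t = 1 / β`, the exponent `-((1 - β) * r) / β` is the affine function `-(t - 1) * r`, so the
function in question is the perspective `β * g (1 / β)` of a function `g` on `(1, ∞)`. Here `g` is
a positive multiple of the logarithm of `(1 + b - 4 ^ (-(t - 1) * r) * (b - e)) / (1 + e)`, which
is positive (even `> 1`) and strictly concave because the exponential is strictly convex and
`b > e`; the increasing concave logarithm preserves this (`strictConcaveOn_rate`). Strict concavity
then passes to the perspective (`StrictConcaveOn.perspective_Ioo`).
-/

/-- The one-variable perspective `x ↦ x * g (1 / x)` preserves strict concavity: if
`z = p * x + q * y` with `p + q = 1`, then `1 / z` is the convex combination of `1 / x` and `1 / y`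
with weights `p * x / z` and `q * y / z`. -/
lemma StrictConcaveOn.perspective_Ioo {g : ℝ → ℝ} (hg : StrictConcaveOn ℝ (Set.Ioi 1) g) :
    StrictConcaveOn ℝ (Set.Ioo (0 : ℝ) 1) (fun x => x * g (1 / x)) := by
  refine ⟨convex_Ioo 0 1, ?_⟩
  rintro x ⟨hx0, hx1⟩ y ⟨hy0, hy1⟩ hxy p q hp hq hpq
  simp only [smul_eq_mul]
  have hz : 0 < p * x + q * y := by positivity
  have hne : 1 / x ≠ 1 / y := by simpa using hxy
  have hp' : 0 < p * x / (p * x + q * y) := by positivity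
  have hq' : 0 < q * y / (p * x + q * y) := by positivity
  have key := hg.2 (Set.mem_Ioi.2 (one_lt_one_div hx0 hx1))
    (Set.mem_Ioi.2 (one_lt_one_div hy0 hy1)) hne hp' hq' (by field_simp)
  simp only [smul_eq_mul] at key
  have harg : p * x / (p * x + q * y) * (1 / x) + q * y / (p * x + q * y) * (1 / y)
      = 1 / (p * x + q * y) := by
    field_simp
    exact hpq
  rw [harg] at key
  calc p * (x * g (1 / x)) + q * (y * g (1 / y))
      = (p * x + q * y) * (p * x / (p * x + q * y) * g (1 / x)
          + q * y / (p * x + q * y) * g (1 / y)) := by field_simp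
    _ < _ := mul_lt_mul_of_pos_left key hz

lemma strictConcaveOn_rate {b e r : ℝ} (he : 0 ≤ e) (hbe : e < b) (hr : 0 < r) :
    StrictConcaveOn ℝ (Set.Ioi (1 : ℝ)) (fun t : ℝ =>
      (1 / 2) * Real.logb 2 ((1 + b - (4 : ℝ) ^ (-(t - 1) * r) * (b - e)) / (1 + e))) := by
  have hl4 : 0 < Real.log 4 := Real.log_pos (by norm_num)
  have hl2 : 0 < Real.log 2 := Real.log_pos (by norm_num)
  have hbe' : 0 < b - e := sub_pos.2 hbe
  have he' : 0 < 1 + e := by linarith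
  have hpos : ∀ t ∈ Set.Ioi (1 : ℝ),
      0 < (1 + b - (4 : ℝ) ^ (-(t - 1) * r) * (b - e)) / (1 + e) := by
    intro t ht
    have ht' : 0 < (t - 1) * r := mul_pos (sub_pos.2 ht) hr
    have : (4 : ℝ) ^ (-(t - 1) * r) < 1 :=
      Real.rpow_lt_one_of_one_lt_of_neg (by norm_num) (by linarith)
    apply div_pos _ he'
    nlinarith
  refine ⟨convex_Ioi 1, ?_⟩
  intro x hx y hy hxy p q hp hq hpq
  have hX := hpos x hx
  have hY := hpos y hy
  have hexp : (4 : ℝ) ^ (-(p * x + q * y - 1) * r)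
      < p * (4 : ℝ) ^ (-(x - 1) * r) + q * (4 : ℝ) ^ (-(y - 1) * r) := by
    have hne : Real.log 4 * (-(x - 1) * r) ≠ Real.log 4 * (-(y - 1) * r) := by
      intro h
      have := mul_right_cancel₀ hr.ne' (mul_left_cancel₀ hl4.ne' h)
      exact hxy (by linarith)
    have := strictConvexOn_exp.2 (Set.mem_univ _) (Set.mem_univ _) hne hp hq hpq
    simp only [smul_eq_mul] at this
    simp only [Real.rpow_def_of_pos (show (0 : ℝ) < 4 by norm_num)]
    have harg : Real.log 4 * (-(p * x + q * y - 1) * r)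
        = p * (Real.log 4 * (-(x - 1) * r)) + q * (Real.log 4 * (-(y - 1) * r)) := by
      linear_combination (-Real.log 4 * r) * hpq
    rwa [harg]
  have hlog := strictConcaveOn_log_Ioi.concaveOn.2 (Set.mem_Ioi.2 hX) (Set.mem_Ioi.2 hY)
    hp.le hq.le hpq
  simp only [smul_eq_mul] at hlog ⊢
  have hlt : p * ((1 + b - (4 : ℝ) ^ (-(x - 1) * r) * (b - e)) / (1 + e))
        + q * ((1 + b - (4 : ℝ) ^ (-(y - 1) * r) * (b - e)) / (1 + e))
      < (1 + b - (4 : ℝ) ^ (-(p * x + q * y - 1) * r) * (b - e)) / (1 + e) := by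
    rw [← mul_div_assoc, ← mul_div_assoc, ← add_div]
    apply div_lt_div_of_pos_right _ he'
    have h1 := mul_lt_mul_of_pos_right hexp hbe'
    have h2 : p * (1 + b) + q * (1 + b) = 1 + b := by rw [← add_mul, hpq, one_mul]
    linarith
  have hfin := hlog.trans_lt (Real.log_lt_log (by positivity) hlt)
  simp only [Real.logb]
  have := div_lt_div_of_pos_right hfin hl2
  rw [add_div, mul_div_assoc, mul_div_assoc] at this
  linarith

theorem stmt_1 (b e r : ℝ) (he : 0 ≤ e) (hbe : e < b) (hr : 0 < r) :
    StrictConcaveOn ℝ (Set.Ioo (0 : ℝ) 1)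
      (fun β : ℝ =>
        (β / 2) * Real.logb 2 ((1 + b - (4 : ℝ) ^ (-((1 - β) * r) / β) * (b - e)) / (1 + e))) := by
  refine (strictConcaveOn_rate he hbe hr).perspective_Ioo.congr ?_
  intro β hβ
  have hβ0 : β ≠ 0 := hβ.1.ne'
  have harg : -(1 / β - 1) * r = -((1 - β) * r) / β := by field_simp
  simp only [harg]
  ring
end

section
/- Let β > 0, R_r ≥ 0, σx² > 0, b ≥ 0, e ≥ 0 be real numbers and set s = σx² / ( 4^(R_r/β)·(1 + b) − b ). Then (β/2)·log₂( (1 + b) / (1 + b·s/σx²) ) − (β/2)·log₂( (1 + e) / (1 + e·s/σx²) ) = (β/2)·log₂( (1 − 4^(−R_r/β)·(b − e) + b) / (1 + e) ). -/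
/-! Put `t = 4 ^ (Rr / β) ≥ 1` and `D = t * (1 + b) - b > 0`, so that `s / σx2 = 1 / D`. The arguments
of the two logarithms on the left are then `D / t` and `(1 + e) * D / (D + e)`. Both are positive, so
the difference of logarithms is the logarithm of the quotient `(D + e) / (t * (1 + e))`, which is
the argument on the right. -/

open Real

theorem stmt_4 (β Rr σx2 b e : ℝ) (hβ : 0 < β) (hRr : 0 ≤ Rr) (hσ : 0 < σx2)
    (hb : 0 ≤ b) (he : 0 ≤ e) :
    (β / 2) * Real.logb 2 ((1 + b) / (1 + b * (σx2 / ((4 : ℝ) ^ (Rr / β) * (1 + b) - b)) / σx2))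
      - (β / 2) * Real.logb 2 ((1 + e) / (1 + e * (σx2 / ((4 : ℝ) ^ (Rr / β) * (1 + b) - b)) / σx2))
    = (β / 2) * Real.logb 2 ((1 - (4 : ℝ) ^ (-Rr / β) * (b - e) + b) / (1 + e)) := by
  have ht : (1 : ℝ) ≤ (4 : ℝ) ^ (Rr / β) :=
    Real.one_le_rpow (by norm_num) (by positivity)
  rw [neg_div, Real.rpow_neg (by norm_num)]
  generalize (4 : ℝ) ^ (Rr / β) = t at ht ⊢
  have htpos : 0 < t := by linarith
  -- `t * (1 + b) - b = 1 + (t - 1) * (1 + b)`, so the denominator of `s` is positive.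
  have hD : 0 < t * (1 + b) - b := by nlinarith
  have hDe : 0 < t * (1 + b) - b + e := by linarith
  have h1 : (1 + b) / (1 + b * (σx2 / (t * (1 + b) - b)) / σx2) = (t * (1 + b) - b) / t := by
    have h : 1 + b * (σx2 / (t * (1 + b) - b)) / σx2 = t * (1 + b) / (t * (1 + b) - b) := by
      field_simp
      ring
    rw [h]
    field_simp
  have h2 : (1 + e) / (1 + e * (σx2 / (t * (1 + b) - b)) / σx2)
      = (1 + e) * (t * (1 + b) - b) / (t * (1 + b) - b + e) := by
    have h : 1 + e * (σx2 / (t * (1 + b) - b)) / σx2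
        = (t * (1 + b) - b + e) / (t * (1 + b) - b) := by
      field_simp
    rw [h]
    field_simp
  have h1e : 0 < 1 + e := by linarith
  rw [h1, h2, ← mul_sub, ← Real.logb_div (by positivity) (by positivity)]
  congr 2
  field_simp
  ring
end

section
/- Let σ² > 0 and let μ be the Gaussian measure on ℝ with mean 0 and variance σ². Then ∫ ln(x²) dμ(x) = ln(σ²/2) − γ, where γ is the Euler–Mascheroni constant. -/
/-!
The law of `x ^ 2 / (2σ²)` under the centred Gaussian is the Gamma law of shape `1/2`, so the
expectation of `log (x ^ 2)` is `log (2σ²)` plus the logarithmic moment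
`Γ(1/2)⁻¹ ∫ t in Ioi 0, t ^ (-1/2) * log t * exp (-t)`. Differentiating Euler's integral under the
integral sign identifies the latter integral with `Γ'(1/2)`, and Mathlib evaluates
`Γ'(1/2) = -√π (γ + 2 log 2)` by the duplication formula (`hasDerivAt_Gamma_one_half`). Hence the
value is `log (2σ²) - γ - 2 log 2 = log (σ² / 2) - γ`.
-/

open Real MeasureTheory ProbabilityTheory

/-- The integral is `Γ'(1/2)`, by differentiation of Euler's integral under the integral sign. -/
lemma integral_rpow_log_exp_neg :
    ∫ t in Set.Ioi (0 : ℝ), t ^ (-(1 / 2) : ℝ) * (Real.log t * Real.exp (-t))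
      = -√π * (Real.eulerMascheroniConstant + 2 * Real.log 2) := by
  have hs : 0 < (1 / 2 : ℂ).re := by norm_num
  have h1 := Complex.hasDerivAt_GammaIntegral hs
  have h2 : HasDerivAt Complex.Gamma _ (1 / 2 : ℂ) :=
    h1.congr_of_eventuallyEq (by
      filter_upwards [(isOpen_lt continuous_const Complex.continuous_re).mem_nhds hs] with a ha
        using Complex.Gamma_eq_integral ha)
  have h3 := h2.unique Complex.hasDerivAt_Gamma_one_half
  rw [← Complex.ofReal_inj, ← integral_complex_ofReal]
  push_cast
  rw [Complex.ofReal_log zero_le_two]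
  push_cast
  rw [← h3]
  refine setIntegral_congr_fun measurableSet_Ioi fun t ht => ?_
  have ht' : (0 : ℝ) ≤ t := le_of_lt ht
  rw [Complex.ofReal_cpow ht']
  push_cast
  norm_num

/-- Integrability comes for free: a non-integrable function would have Bochner integral `0`,
whereas the value `Γ'(1/2)` is nonzero. -/
lemma integrableOn_rpow_log_exp_neg :
    IntegrableOn (fun t : ℝ => t ^ (-(1 / 2) : ℝ) * (Real.log t * Real.exp (-t)))
      (Set.Ioi 0) := by
  by_contra h
  have h0 := integral_rpow_log_exp_neg
  rw [integral_undef h] at h0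
  have h1 : 0 < √π := Real.sqrt_pos.2 Real.pi_pos
  have h2 := Real.one_half_lt_eulerMascheroniConstant
  have h3 := Real.log_pos one_lt_two
  have h4 : 0 < √π * (Real.eulerMascheroniConstant + 2 * Real.log 2) := by positivity
  linarith

lemma integrableOn_rpow_exp_neg :
    IntegrableOn (fun t : ℝ => t ^ (-(1 / 2) : ℝ) * Real.exp (-t)) (Set.Ioi 0) := by
  have h := Real.GammaIntegral_convergent (s := 1 / 2) (by norm_num)
  norm_num [mul_comm] at h ⊢
  exact h

lemma integral_rpow_exp_neg :
    ∫ t in Set.Ioi (0 : ℝ), t ^ (-(1 / 2) : ℝ) * Real.exp (-t) = √π := by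
  rw [← Real.Gamma_one_half_eq, Real.Gamma_eq_integral (by norm_num)]
  norm_num [mul_comm]

theorem stmt_5 (σ2 : NNReal) (hσ : 0 < σ2) :
    ∫ x, Real.log (x ^ 2) ∂(gaussianReal 0 σ2)
      = Real.log ((σ2 : ℝ) / 2) - Real.eulerMascheroniConstant := by
  have hv : (0 : ℝ) < σ2 := hσ
  set v : ℝ := (σ2 : ℝ) with hvdef
  have ha : 0 < 2 * v := by positivity
  -- The density of `x ^ 2` under the Gaussian law, multiplied by `log`.
  let g : ℝ → ℝ := fun y =>
    (√(2 * π * v))⁻¹ * (y ^ (-(1 / 2) : ℝ) * (Real.log y * Real.exp (-y / (2 * v))))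
  have hE : ∫ x, Real.log (x ^ 2) ∂(gaussianReal 0 σ2) = ∫ y in Set.Ioi (0 : ℝ), g y := by
    rw [integral_gaussianReal_eq_integral_smul hσ.ne',
      ← integral_comp_rpow_Ioi_of_pos (g := g) (p := 2) two_pos]
    have habs := integral_comp_abs
      (f := fun x : ℝ => gaussianPDFReal 0 σ2 x * Real.log (x ^ 2))
    simp only [gaussianPDFReal, sub_zero, sq_abs, smul_eq_mul] at habs ⊢
    rw [habs, ← integral_const_mul]
    refine setIntegral_congr_fun measurableSet_Ioi fun x hx => ?_
    have hx' : (0 : ℝ) < x := hx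
    have h1 : (x ^ 2) ^ (-(1 / 2) : ℝ) = x⁻¹ := by
      rw [← Real.rpow_natCast, ← Real.rpow_mul hx'.le]
      norm_num [Real.rpow_neg_one]
    have h2 : (2 : ℝ) - 1 = 1 := by norm_num
    simp only [g, Real.rpow_two, h1, h2, Real.rpow_one, ← hvdef]
    field_simp
  have hscale := integral_comp_mul_left_Ioi g 0 ha
  rw [mul_zero, smul_eq_mul] at hscale
  have hg : ∫ t in Set.Ioi (0 : ℝ), g (2 * v * t) = (√π * (2 * v))⁻¹ *
      (√π * Real.log (2 * v)
        + -√π * (Real.eulerMascheroniConstant + 2 * Real.log 2)) := by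
    rw [← integral_rpow_log_exp_neg, mul_comm √π (Real.log (2 * v))]
    nth_rewrite 2 [← integral_rpow_exp_neg]
    rw [← integral_const_mul, ← integral_add (integrableOn_rpow_exp_neg.const_mul _)
      integrableOn_rpow_log_exp_neg, ← integral_const_mul]
    refine setIntegral_congr_fun measurableSet_Ioi fun t ht => ?_
    have ht' : (0 : ℝ) < t := ht
    have h1 : -(2 * v * t) / (2 * v) = -t := by field_simp
    have h2 : √(2 * π * v) = √π * √(2 * v) := by
      rw [← Real.sqrt_mul Real.pi_pos.le]; congr 1; ring
    have h3 : (2 * v) ^ (-(1 / 2) : ℝ) = (√(2 * v))⁻¹ := by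
      rw [Real.rpow_neg ha.le, Real.sqrt_eq_rpow]
    have h4 : (√π * (2 * v))⁻¹ = (√π)⁻¹ * ((√(2 * v))⁻¹ * (√(2 * v))⁻¹) := by
      rw [← mul_inv, ← mul_inv, Real.mul_self_sqrt ha.le]
    simp only [g]
    rw [h1, h2, h4, Real.mul_rpow ha.le ht'.le, h3, Real.log_mul ha.ne' ht'.ne', mul_inv]
    ring
  rw [hg] at hscale
  have hlog : Real.log (v / 2) = Real.log (2 * v) - 2 * Real.log 2 := by
    rw [Real.log_div hv.ne' two_ne_zero, Real.log_mul two_ne_zero hv.ne']; ring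
  have hpi : √π ≠ 0 := (Real.sqrt_pos.2 Real.pi_pos).ne'
  rw [hE, hlog]
  field_simp at hscale
  linarith
end

section
/- Let σ² > 0 and c > 0 be real numbers, and let μ be the Gaussian measure on ℝ with mean 0 and variance σ². Then ∫ log₂(1 + c·x²) dμ(x) ≥ log₂( 1 + c·(σ²/2)·e^(−γ) ), where γ is the Euler–Mascheroni constant. -/
/-!
Let `m = log (v / 2) - γ`. For `X = log x²` under `gaussianReal 0 v`, the moment generating function
is a Gamma integral, `E[exp (t X)] = E[|x| ^ (2 t)] = (2 v) ^ t * Γ (t + 1 / 2) / √π` for `t > -1/2`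
(`mgf_log_sq`). Hence `X` is integrable, and differentiating at `t = 0` with the known value of
`Γ' (1 / 2)` gives `E[X] = m` (`integral_log_sq`).
Jensen's inequality for the convex function `y ↦ log (1 + c * exp y)` is applied in the form of its
supporting line at `m` (`tangent_le`), integrated over the Gaussian measure.
-/

open Real MeasureTheory ProbabilityTheory

/-- The supporting line at `m` of the convex function `y ↦ log (1 + c * exp y)`. -/
lemma tangent_le {c : ℝ} (hc : 0 < c) (m y : ℝ) :
    log (1 + c * exp m) + c * exp m / (1 + c * exp m) * (y - m) ≤ log (1 + c * exp y) := by
  have hm : 0 < 1 + c * exp m := by positivity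
  have hy : 0 < 1 + c * exp y := by positivity
  -- Convexity of `exp` at the points `0` and `y - m`, with weights `1 - w` and `w`.
  have key := convexOn_exp.2 (Set.mem_univ 0) (Set.mem_univ (y - m))
    (show 0 ≤ 1 / (1 + c * exp m) by positivity)
    (show 0 ≤ c * exp m / (1 + c * exp m) by positivity) (by field_simp)
  simp only [smul_eq_mul, mul_zero, zero_add, exp_zero, mul_one] at key
  rw [le_log_iff_exp_le hy, exp_add, exp_log hm]
  calc (1 + c * exp m) * exp (c * exp m / (1 + c * exp m) * (y - m))
      ≤ (1 + c * exp m) * (1 / (1 + c * exp m) + c * exp m / (1 + c * exp m) * exp (y - m)) := by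
        gcongr
    _ = 1 + c * exp y := by
        rw [exp_sub]; field_simp

lemma mgf_log_sq {v : NNReal} (hv : 0 < v) {t : ℝ} (ht : -(1 / 2) < t) :
    mgf (fun x : ℝ ↦ log (x ^ 2)) (gaussianReal 0 v) t =
      (2 * (v : ℝ)) ^ t * Gamma (t + 1 / 2) / √π := by
  have hv' : (0 : ℝ) < v := hv
  rw [mgf, integral_gaussianReal_eq_integral_smul hv.ne']
  have h1 : ∀ x : ℝ, gaussianPDFReal 0 v x • exp (t * log (x ^ 2)) =
      (fun u : ℝ ↦ gaussianPDFReal 0 v u * exp (t * log (u ^ 2))) |x| := by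
    intro x
    simp [gaussianPDFReal]
  simp_rw [h1]
  rw [integral_comp_abs (f := fun u : ℝ ↦ gaussianPDFReal 0 v u * exp (t * log (u ^ 2)))]
  have h2 : ∫ u in Set.Ioi (0 : ℝ), gaussianPDFReal 0 v u * exp (t * log (u ^ 2)) =
      ∫ u in Set.Ioi (0 : ℝ), (√(2 * π * v))⁻¹ *
        (u ^ (2 * t) * exp (-(2 * (v : ℝ))⁻¹ * u ^ (2 : ℝ))) := by
    refine setIntegral_congr_fun measurableSet_Ioi fun u hu ↦ ?_
    have hu : 0 < u := hu
    simp only [gaussianPDFReal, rpow_def_of_pos hu (2 * t), rpow_two, log_pow, sub_zero]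
    rw [mul_assoc, mul_comm (exp (log u * _))]
    congr 3 <;> push_cast <;> field_simp
  rw [h2, integral_const_mul, integral_rpow_mul_exp_neg_mul_rpow two_pos (by linarith)
    (by positivity), inv_rpow (by positivity), ← rpow_neg (by positivity),
    show -(-(2 * t + 1) / 2) = t + 1 / 2 by ring, show (2 * t + 1) / 2 = t + 1 / 2 by ring,
    rpow_add (by positivity), ← sqrt_eq_rpow, show 2 * π * v = π * (2 * (v : ℝ)) by ring,
    sqrt_mul pi_pos.le]
  have := sqrt_pos.2 (show 0 < 2 * (v : ℝ) by positivity)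
  field_simp

lemma zero_mem_interior_integrableExpSet {v : NNReal} (hv : 0 < v) :
    (0 : ℝ) ∈ interior (integrableExpSet (fun x : ℝ ↦ log (x ^ 2)) (gaussianReal 0 v)) := by
  have hv' : (0 : ℝ) < v := hv
  refine mem_interior.2 ⟨Set.Ioi (-(1 / 2)), fun t ht ↦ ?_, isOpen_Ioi, by simp⟩
  have ht : -(1 / 2) < t := ht
  -- A Bochner integral that is nonzero forces integrability.
  refine Integrable.of_integral_ne_zero ?_
  have h := mgf_log_sq hv ht
  rw [mgf] at h
  rw [h]
  have := Gamma_pos_of_pos (show 0 < t + 1 / 2 by linarith)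
  positivity

lemma integral_log_sq {v : NNReal} (hv : 0 < v) :
    ∫ x, log (x ^ 2) ∂(gaussianReal 0 v) = log ((v : ℝ) / 2) - eulerMascheroniConstant := by
  have hv' : (0 : ℝ) < v := hv
  rw [← deriv_mgf_zero (zero_mem_interior_integrableExpSet hv)]
  have hev : mgf (fun x : ℝ ↦ log (x ^ 2)) (gaussianReal 0 v) =ᶠ[nhds 0]
      fun t ↦ (2 * (v : ℝ)) ^ t * Gamma (t + 1 / 2) / √π := by
    filter_upwards [Ioi_mem_nhds (show -(1 / 2) < (0 : ℝ) by norm_num)] with t ht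
    exact mgf_log_sq hv ht
  rw [hev.deriv_eq]
  have hG : HasDerivAt (fun t : ℝ ↦ Gamma (t + 1 / 2))
      (-√π * (eulerMascheroniConstant + 2 * log 2)) 0 := by
    apply HasDerivAt.comp_add_const
    simpa using hasDerivAt_Gamma_one_half
  have hp := hasDerivAt_id (0 : ℝ) |>.const_rpow (show 0 < 2 * (v : ℝ) by positivity)
  have hd := ((hp.mul hG).div_const (√π)).deriv
  refine hd.trans ?_
  simp only [id, zero_add, Gamma_one_half_eq, rpow_zero]
  have := sqrt_pos.2 pi_pos
  rw [log_mul two_ne_zero hv'.ne', log_div hv'.ne' two_ne_zero]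
  field_simp
  ring

lemma integrable_log_one_add {c : ℝ} (hc : 0 < c) (v : NNReal) :
    Integrable (fun x : ℝ ↦ log (1 + c * x ^ 2)) (gaussianReal 0 v) := by
  have hsq : Integrable (fun x : ℝ ↦ c * x ^ 2) (gaussianReal 0 v) :=
    (memLp_id_gaussianReal 2).integrable_sq.const_mul c
  refine hsq.mono' (Measurable.aestronglyMeasurable (by fun_prop))
    (ae_of_all _ fun x ↦ ?_)
  have h0 : 0 ≤ c * x ^ 2 := by positivity
  rw [norm_of_nonneg (log_nonneg (by linarith))]
  linarith [log_le_sub_one_of_pos (show 0 < 1 + c * x ^ 2 by positivity)]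

theorem stmt_7 (σ2 : NNReal) (c : ℝ) (hσ : 0 < σ2) (hc : 0 < c) :
    Real.logb 2 (1 + c * ((σ2 : ℝ) / 2) * Real.exp (-Real.eulerMascheroniConstant))
      ≤ ∫ x, Real.logb 2 (1 + c * x ^ 2) ∂(gaussianReal 0 σ2) := by
  have hv' : (0 : ℝ) < σ2 := hσ
  have hX := integrable_of_mem_interior_integrableExpSet (zero_mem_interior_integrableExpSet hσ)
  have hmean := integral_log_sq hσ
  set m := log ((σ2 : ℝ) / 2) - eulerMascheroniConstant with hm
  have hexp : exp m = (σ2 : ℝ) / 2 * exp (-eulerMascheroniConstant) := by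
    rw [hm, sub_eq_add_neg, exp_add, exp_log (by positivity)]
  simp only [logb, integral_div]
  rw [mul_assoc, ← hexp]
  gcongr
  set w := c * exp m / (1 + c * exp m)
  have hlin : Integrable (fun x : ℝ ↦ w * (log (x ^ 2) - m)) (gaussianReal 0 σ2) :=
    (hX.sub (integrable_const m)).const_mul w
  calc log (1 + c * exp m)
      = ∫ x, (log (1 + c * exp m) + w * (log (x ^ 2) - m)) ∂(gaussianReal 0 σ2) := by
        rw [integral_add (integrable_const _) hlin, integral_const_mul,
          integral_sub hX (integrable_const m), hmean]
        simp
    _ ≤ ∫ x, log (1 + c * x ^ 2) ∂(gaussianReal 0 σ2) := by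
        refine integral_mono_ae ((integrable_const _).add hlin) (integrable_log_one_add hc σ2) ?_
        -- `exp (log (x ^ 2)) = x ^ 2` fails at `x = 0`, which is a null set.
        have := nullSingletonClass_gaussianReal (μ := 0) hσ.ne'
        filter_upwards [Measure.ae_ne (gaussianReal 0 σ2) (0 : ℝ)] with x hx
        have h := tangent_le hc m (log (x ^ 2))
        rwa [exp_log (by positivity)] at h
end

section
/- Let P > 0, γa > 0, γb > 0 and ρe, ρae, ρbe be real numbers with |ρe| ≤ 1, and define the 2×2 matrix Σ = [[1+γa, √(γa·γb)·ρe], [√(γa·γb)·ρe, 1+γb]], the vector v = √P·(√γa·ρae, √γb·ρbe), σx² = 1+P, and N = P·γa·(1+γb)·ρae² + P·γb·(1+γa)·ρbe² − 2·P·γa·γb·ρae·ρbe·ρe. Then Σ is invertible and, provided σx² − vᵀΣ⁻¹v ≠ 0, (vᵀΣ⁻¹v) / (σx² − vᵀΣ⁻¹v) = N / ( (1+P)·[(1+γa)(1+γb) − γa·γb·ρe²] − N ). -/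
/-!
Writing `D = (1 + γa)(1 + γb) - γa γb ρe²` for the determinant of the covariance matrix, `|ρe| ≤ 1`
gives `D ≥ 1 + γa + γb > 0`. The adjugate formula for the inverse of a `2 × 2` matrix yields
`vᵀ Σ⁻¹ v = N / D`, after which the claim is `(N / D) / (σx² - N / D) = N / (σx² D - N)`.
-/

open Matrix Real

theorem stmt_11 (P γa γb ρe ρae ρbe : ℝ) (hP : 0 < P) (hγa : 0 < γa) (hγb : 0 < γb)
    (hρe : |ρe| ≤ 1) :
    let S : Matrix (Fin 2) (Fin 2) ℝ :=
      !![1 + γa, Real.sqrt (γa * γb) * ρe; Real.sqrt (γa * γb) * ρe, 1 + γb]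
    let v : Fin 2 → ℝ := ![Real.sqrt P * (Real.sqrt γa * ρae), Real.sqrt P * (Real.sqrt γb * ρbe)]
    let σx2 : ℝ := 1 + P
    let N : ℝ := P * γa * (1 + γb) * ρae ^ 2 + P * γb * (1 + γa) * ρbe ^ 2
      - 2 * P * γa * γb * ρae * ρbe * ρe
    IsUnit S ∧
      (σx2 - v ⬝ᵥ (S⁻¹ *ᵥ v) ≠ 0 →
        (v ⬝ᵥ (S⁻¹ *ᵥ v)) / (σx2 - v ⬝ᵥ (S⁻¹ *ᵥ v))
          = N / ((1 + P) * ((1 + γa) * (1 + γb) - γa * γb * ρe ^ 2) - N)) := by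
  intro S v σx2 N
  set D : ℝ := (1 + γa) * (1 + γb) - γa * γb * ρe ^ 2 with hD
  have hρ : ρe ^ 2 ≤ 1 := (sq_le_one_iff_abs_le_one ρe).2 hρe
  have hDpos : 0 < D := by
    have hab : 0 < γa * γb := mul_pos hγa hγb
    nlinarith [mul_le_mul_of_nonneg_left hρ hab.le]
  have hP2 : √P ^ 2 = P := Real.sq_sqrt hP.le
  have ha2 : √γa ^ 2 = γa := Real.sq_sqrt hγa.le
  have hb2 : √γb ^ 2 = γb := Real.sq_sqrt hγb.le
  have hs : √(γa * γb) = √γa * √γb := Real.sqrt_mul hγa.le γb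
  have hdet : S.det = D := by
    simp only [S, Matrix.det_fin_two_of, hs, hD]
    linear_combination (-ρe ^ 2 * √γb ^ 2) * ha2 + (-ρe ^ 2 * γa) * hb2
  have hq : v ⬝ᵥ (S⁻¹ *ᵥ v) = N / D := by
    have hadj : v ⬝ᵥ (S.adjugate *ᵥ v) = N := by
      simp only [S, v, N, Matrix.adjugate_fin_two_of, hs, Matrix.mulVec, dotProduct,
        Fin.sum_univ_two, Matrix.of_apply, Matrix.cons_val_zero, Matrix.cons_val_one]
      -- Expressing everything in the square roots makes the claim a polynomial identity.
      generalize √P = p, √γa = a, √γb = b at *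
      subst hP2 ha2 hb2
      ring
    rw [Matrix.inv_def, hdet, Ring.inverse_eq_inv', Matrix.smul_mulVec, dotProduct_smul, hadj,
      smul_eq_mul, inv_mul_eq_div]
  refine ⟨(Matrix.isUnit_iff_isUnit_det S).2 (hdet ▸ hDpos.ne'.isUnit), fun _ => ?_⟩
  rw [hq, sub_div' hDpos.ne', div_div_div_cancel_right₀ hDpos.ne']
end

section
/- Let P > 0, γa > 0, γb > 0 and ρe, ρae, ρbe be real numbers with |ρe| < 1, and define Σ = [[γa, √(γa·γb)·ρe], [√(γa·γb)·ρe, γb]], v = √P·(√γa·ρae, √γb·ρbe), and σx² = 1+P. If (1+P)·(1−ρe²) − P·(ρae² + ρbe² − 2·ρe·ρae·ρbe) > 0, then Σ is invertible and (vᵀΣ⁻¹v) / (σx² − vᵀΣ⁻¹v) = P·(ρae² + ρbe² − 2·ρe·ρae·ρbe) / ( (1+P)·(1−ρe²) − P·(ρae² + ρbe² − 2·ρe·ρae·ρbe) ). -/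
/-!
Write `γa`, `γb`, `P` as squares of their square roots. Then `det Σ = γa γb (1 - ρe²)`, which is
positive because `|ρe| < 1`, and `vᵀ adj(Σ) v = γa γb P (ρae² + ρbe² - 2 ρe ρae ρbe)`.
Since `Σ⁻¹ = (det Σ)⁻¹ adj(Σ)`, the gains `γa γb` cancel in `vᵀ Σ⁻¹ v`, and multiplying the
numerator and denominator of the target ratio by `1 - ρe²` gives the claim.
-/

open Matrix Real

theorem stmt_13 (P γa γb ρe ρae ρbe : ℝ) (hP : 0 < P) (hγa : 0 < γa) (hγb : 0 < γb)
    (hρe : |ρe| < 1)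
    (hfeas : 0 < (1 + P) * (1 - ρe ^ 2) - P * (ρae ^ 2 + ρbe ^ 2 - 2 * ρe * ρae * ρbe)) :
    let S : Matrix (Fin 2) (Fin 2) ℝ :=
      !![γa, Real.sqrt (γa * γb) * ρe; Real.sqrt (γa * γb) * ρe, γb]
    let v : Fin 2 → ℝ := ![Real.sqrt P * (Real.sqrt γa * ρae), Real.sqrt P * (Real.sqrt γb * ρbe)]
    let σx2 : ℝ := 1 + P
    IsUnit S ∧
      (v ⬝ᵥ (S⁻¹ *ᵥ v)) / (σx2 - v ⬝ᵥ (S⁻¹ *ᵥ v))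
        = P * (ρae ^ 2 + ρbe ^ 2 - 2 * ρe * ρae * ρbe)
          / ((1 + P) * (1 - ρe ^ 2) - P * (ρae ^ 2 + ρbe ^ 2 - 2 * ρe * ρae * ρbe)) := by
  intro S v σx2
  have hr : 0 < 1 - ρe ^ 2 := by
    have := (sq_lt_one_iff_abs_lt_one ρe).2 hρe
    linarith
  have ha : √γa ^ 2 = γa := Real.sq_sqrt hγa.le
  have hb : √γb ^ 2 = γb := Real.sq_sqrt hγb.le
  have hp : √P ^ 2 = P := Real.sq_sqrt hP.le
  have hab : √(γa * γb) = √γa * √γb := Real.sqrt_mul hγa.le γb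
  have hdet : S.det = γa * γb * (1 - ρe ^ 2) := by
    simp only [S, Matrix.det_fin_two_of, hab]
    linear_combination (-√γb ^ 2 * ρe ^ 2) * ha - γa * ρe ^ 2 * hb
  have hdet0 : S.det ≠ 0 := by rw [hdet]; positivity
  have hunit : IsUnit S := (Matrix.isUnit_iff_isUnit_det S).2 hdet0.isUnit
  have hq : v ⬝ᵥ (S⁻¹ *ᵥ v)
      = P * (ρae ^ 2 + ρbe ^ 2 - 2 * ρe * ρae * ρbe) / (1 - ρe ^ 2) := by
    have hadj : v ⬝ᵥ (S.adjugate *ᵥ v)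
        = γa * γb * (P * (ρae ^ 2 + ρbe ^ 2 - 2 * ρe * ρae * ρbe)) := by
      simp only [S, v, Matrix.adjugate_fin_two_of, hab, Matrix.mulVec, dotProduct,
        Fin.sum_univ_two, Matrix.of_apply, Matrix.cons_val_zero, Matrix.cons_val_one]
      -- Rewriting each parameter as the square of its root leaves a polynomial identity.
      generalize √γa = a at *
      generalize √γb = b at *
      generalize √P = p at *
      rw [← ha, ← hb, ← hp]
      ring
    rw [Matrix.inv_def, Matrix.smul_mulVec, dotProduct_smul, hadj, hdet,
      Ring.inverse_eq_inv', smul_eq_mul]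
    field_simp
  refine ⟨hunit, ?_⟩
  have hsub : σx2 - P * (ρae ^ 2 + ρbe ^ 2 - 2 * ρe * ρae * ρbe) / (1 - ρe ^ 2)
      = ((1 + P) * (1 - ρe ^ 2) - P * (ρae ^ 2 + ρbe ^ 2 - 2 * ρe * ρae * ρbe))
        / (1 - ρe ^ 2) := by
    simp only [σx2]
    field_simp
  rw [hq, hsub, div_div_div_cancel_right₀ hr.ne']
end

section
/- Let ρe, ρae, ξ be real numbers with ξ > 0, ρae ≠ 0, 1 + ρe − 2·ρae² > 0, and S − ρae²·(1+ξ)² > 0 where S = 1 + ξ² + 2·ρe·ξ. Then the strict inequality (1 + ρe) / (1 + ρe − 2·ρae²) > S / (S − ρae²·(1+ξ)²) holds if and only if ρe < 1 and ξ ≠ 1. -/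
theorem stmt_15 (ρe ρae ξ : ℝ) (hξ : 0 < ξ) (hρae : ρae ≠ 0)
    (h1 : 0 < 1 + ρe - 2 * ρae ^ 2)
    (h2 : 0 < (1 + ξ ^ 2 + 2 * ρe * ξ) - ρae ^ 2 * (1 + ξ) ^ 2) :
    ((1 + ξ ^ 2 + 2 * ρe * ξ) / ((1 + ξ ^ 2 + 2 * ρe * ξ) - ρae ^ 2 * (1 + ξ) ^ 2)
        < (1 + ρe) / (1 + ρe - 2 * ρae ^ 2)) ↔ (ρe < 1 ∧ ξ ≠ 1) := by
  -- Cross-multiplying by the positive denominators, the difference of the two sides factors.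
  have key : (1 + ρe) * ((1 + ξ ^ 2 + 2 * ρe * ξ) - ρae ^ 2 * (1 + ξ) ^ 2)
      - (1 + ξ ^ 2 + 2 * ρe * ξ) * (1 + ρe - 2 * ρae ^ 2)
      = (ρae ^ 2 * (1 - ξ) ^ 2) * (1 - ρe) := by ring
  rw [div_lt_div_iff₀ h2 h1, ← sub_pos, key]
  constructor
  · intro h
    have hρ : 0 < 1 - ρe := pos_of_mul_pos_right h (by positivity)
    refine ⟨by linarith, ?_⟩
    rintro rfl
    simp at h
  · rintro ⟨hρ, hne⟩
    have h1ξ : 1 - ξ ≠ 0 := sub_ne_zero.mpr hne.symm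
    have hρ' : 0 < 1 - ρe := by linarith
    positivity
end

section
/- Let δ, ρba, ρae, ρe, ξ be real numbers with 0 < δ ≤ 1, 0 < δ²·ρba² < 1, ρba² < 1, ξ > 0, 1 + ρe − 2·ρae² > 0, and (1 + ξ² + 2·ξ·ρe) − ρae²·(1+ξ)² > 0. Define b_HD = δ²·ρba² / (1 − δ²·ρba²), e_HD = 2·ρae² / (1 + ρe − 2·ρae²), b_FD = ρba² / (1 − ρba²), and e_FD = ρae²·(1+ξ)² / ( (1 + ξ² + 2·ξ·ρe) − ρae²·(1+ξ)² ). If δ²·ρba² > 2·ρae² / (1 + ρe − 2·ρae²) and ρe < 1, then b_HD > e_HD and (1 + b_FD)/(1 + e_FD) ≥ (1 + b_HD)/(1 + e_HD); moreover the latter inequality is strict whenever additionally ρae ≠ 0 and ξ ≠ 1. -/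
/-!
Write `x = δ² ρba²`, `a = ρae²` and `E = 1 + ξ² + 2ξρe`. Then `1 + b = 1 / (1 - x)` for half-duplex
(with `ρba²` in place of `x` for full-duplex), while `1 / (1 + eHD) = 1 - 2a / (1 + ρe)` and
`1 / (1 + eFD) = 1 - a (1 + ξ)² / E`. Since `x ≤ ρba²`, the legitimate factor can only grow, and the
eavesdropper factor grows because of the identity
`2E - (1 + ξ)² (1 + ρe) = (1 - ρe) (1 - ξ)² ≥ 0`,
strictly when `a ≠ 0` and `ξ ≠ 1`. The positivity of the half-duplex rate follows from
`eHD < x ≤ x / (1 - x)`.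
-/

/-- `1 + y / (1 - y)` is monotone on `(-∞, 1)`, being equal to `1 / (1 - y)`. -/
lemma one_add_div_one_sub_mono {x y : ℝ} (hxy : x ≤ y) (hy : y < 1) :
    1 + x / (1 - x) ≤ 1 + y / (1 - y) := by
  have hx' : 0 < 1 - x := by linarith
  have hy' : 0 < 1 - y := by linarith
  have h : x / (1 - x) ≤ y / (1 - y) := by
    rw [div_le_div_iff₀ hx' hy']
    nlinarith
  linarith

/-- The amount by which the half-duplex eavesdropper parameter exceeds the full-duplex one. -/
lemma eve_sub_eq {a r ξ : ℝ} (h1 : 1 + r - 2 * a ≠ 0)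
    (h2 : (1 + ξ ^ 2 + 2 * ξ * r) - a * (1 + ξ) ^ 2 ≠ 0) :
    2 * a / (1 + r - 2 * a)
        - a * (1 + ξ) ^ 2 / ((1 + ξ ^ 2 + 2 * ξ * r) - a * (1 + ξ) ^ 2)
      = a * ((1 - r) * (1 - ξ) ^ 2)
        / ((1 + r - 2 * a) * ((1 + ξ ^ 2 + 2 * ξ * r) - a * (1 + ξ) ^ 2)) := by
  rw [div_sub_div _ _ h1 h2]
  congr 1
  ring

theorem stmt_16 (δ ρba ρae ρe ξ : ℝ)
    (hδ0 : 0 < δ) (hδ1 : δ ≤ 1)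
    (hδρ0 : 0 < δ ^ 2 * ρba ^ 2) (hδρ1 : δ ^ 2 * ρba ^ 2 < 1)
    (hρba : ρba ^ 2 < 1) (hξ : 0 < ξ)
    (h1 : 0 < 1 + ρe - 2 * ρae ^ 2)
    (h2 : 0 < (1 + ξ ^ 2 + 2 * ξ * ρe) - ρae ^ 2 * (1 + ξ) ^ 2)
    (hcond : 2 * ρae ^ 2 / (1 + ρe - 2 * ρae ^ 2) < δ ^ 2 * ρba ^ 2)
    (hρe : ρe < 1) :
    let bHD : ℝ := δ ^ 2 * ρba ^ 2 / (1 - δ ^ 2 * ρba ^ 2)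
    let eHD : ℝ := 2 * ρae ^ 2 / (1 + ρe - 2 * ρae ^ 2)
    let bFD : ℝ := ρba ^ 2 / (1 - ρba ^ 2)
    let eFD : ℝ := ρae ^ 2 * (1 + ξ) ^ 2 / ((1 + ξ ^ 2 + 2 * ξ * ρe) - ρae ^ 2 * (1 + ξ) ^ 2)
    (eHD < bHD ∧ (1 + bHD) / (1 + eHD) ≤ (1 + bFD) / (1 + eFD)) ∧
      (ρae ≠ 0 → ξ ≠ 1 → (1 + bHD) / (1 + eHD) < (1 + bFD) / (1 + eFD)) := by
  intro bHD eHD bFD eFD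
  have hx : δ ^ 2 * ρba ^ 2 ≤ ρba ^ 2 :=
    mul_le_of_le_one_left (sq_nonneg _) (pow_le_one₀ hδ0.le hδ1)
  have hb : 1 + bHD ≤ 1 + bFD := one_add_div_one_sub_mono hx hρba
  have hxb : δ ^ 2 * ρba ^ 2 ≤ bHD :=
    le_div_self hδρ0.le (by linarith) (by linarith)
  have hbpos : 0 < 1 + bHD := by linarith
  have hdiff := eve_sub_eq h1.ne' h2.ne'
  have hr : 0 < 1 - ρe := by linarith
  have heFD : 0 ≤ eFD := div_nonneg (by positivity) h2.le
  have he : eFD ≤ eHD := by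
    rw [← sub_nonneg]
    exact hdiff ▸ div_nonneg (by positivity) (mul_pos h1 h2).le
  refine ⟨⟨hcond.trans_le hxb, ?_⟩, fun ha hξ1 => ?_⟩
  · exact div_le_div₀ (by linarith) hb (by linarith) (by linarith)
  · have hξ' : 1 - ξ ≠ 0 := sub_ne_zero.mpr hξ1.symm
    have hlt : eFD < eHD := by
      rw [← sub_pos]
      exact hdiff ▸ div_pos (by positivity) (mul_pos h1 h2)
    exact div_lt_div₀' hb (by linarith) (by linarith) (by linarith)
end
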